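/- Define the second-order differential operator SU by (SU g)(x) := g″(x) + 3 tanh(x) g′(x) + 2 g(x). Then for every four-times differentiable function g : ℝ → ℂ and every x ∈ ℝ one has the conjugation (intertwining) identity SU( −g″ + g − 6 sech²(·) g )(x) = −(SU g)″(x) + (SU g)(x); that is, SU ∘ 𝓛 = 𝓛₀ ∘ SU where 𝓛 := −∂ₓ² + 1 − 6 sech²(x) and 𝓛₀ := −∂ₓ² + 1. -/

import Mathlib

open Real Complex

noncomputable def sech (x : ℝ) : ℝ := (Real.cosh x)⁻¹

/-- The Darboux conjugation operator `SU = ∂ₓ² + 3 tanh(x) ∂ₓ + 2`. -/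
noncomputable def SU (g : ℝ → ℂ) : ℝ → ℂ :=
  fun x => deriv (deriv g) x + 3 * ((Real.tanh x : ℝ) : ℂ) * deriv g x + 2 * g x

/-!
For a superpotential `w`, put `A = ∂ + w` and `B = -∂ + w`. Then `B A = -∂² + w² - w'` and
`A B = -∂² + w² + w'`, so `A (B A) = (A B) A` says that `A` intertwines these two Schrödinger
operators, and a common constant may be added to their potentials. With `t = tanh` and
`t' = sech² = 1 - t²`, the superpotential `2t` and the constant `-3` lead from `1 - 6 sech²` to
`1 - 2 sech²`, and the superpotential `t` leads from there to `1`. The product of the two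
first-order operators is `SU`.
-/

section Regularity

variable {𝕜 E : Type*} [NontriviallyNormedField 𝕜] [NormedAddCommGroup E] [NormedSpace 𝕜 E]

/-- `f` is `n` times differentiable on `𝕜`. Unlike in `ContDiff 𝕜 n f`, the last derivative need
not be continuous. -/
def DifferentiableUpTo : ℕ → (𝕜 → E) → Prop
  | 0, _ => True
  | n + 1, f => Differentiable 𝕜 f ∧ DifferentiableUpTo n (deriv f)

namespace DifferentiableUpTo

variable {n : ℕ} {w : 𝕜 → 𝕜} {f g : 𝕜 → E}

theorem differentiable (hf : DifferentiableUpTo (n + 1) f) : Differentiable 𝕜 f := hf.1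

protected theorem deriv (hf : DifferentiableUpTo (n + 1) f) : DifferentiableUpTo n (deriv f) := hf.2

theorem of_succ (hf : DifferentiableUpTo (n + 1) f) : DifferentiableUpTo n f := by
  induction n generalizing f with
  | zero => trivial
  | succ n ih => exact ⟨hf.differentiable, ih hf.deriv⟩

theorem of_contDiff (hf : ContDiff 𝕜 n f) : DifferentiableUpTo n f := by
  induction n generalizing f with
  | zero => trivial
  | succ n ih =>
    rw [Nat.cast_succ, contDiff_succ_iff_deriv] at hf
    exact ⟨hf.1, ih hf.2.2⟩

protected theorem neg (hf : DifferentiableUpTo n f) : DifferentiableUpTo n (fun x => -f x) := by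
  induction n generalizing f with
  | zero => trivial
  | succ n ih =>
    refine ⟨hf.differentiable.fun_neg, ?_⟩
    rw [deriv.fun_neg']
    exact ih hf.deriv

protected theorem add (hf : DifferentiableUpTo n f) (hg : DifferentiableUpTo n g) :
    DifferentiableUpTo n (fun x => f x + g x) := by
  induction n generalizing f g with
  | zero => trivial
  | succ n ih =>
    refine ⟨hf.differentiable.fun_add hg.differentiable, ?_⟩
    have hderiv : deriv (fun x => f x + g x) = fun x => deriv f x + deriv g x :=
      funext fun x => deriv_fun_add (hf.differentiable x) (hg.differentiable x)
    rw [hderiv]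
    exact ih hf.deriv hg.deriv

protected theorem smul (hw : DifferentiableUpTo n w) (hf : DifferentiableUpTo n f) :
    DifferentiableUpTo n (fun x => w x • f x) := by
  induction n generalizing w f with
  | zero => trivial
  | succ n ih =>
    refine ⟨hw.differentiable.fun_smul hf.differentiable, ?_⟩
    have hderiv : deriv (fun x => w x • f x) = fun x => w x • deriv f x + deriv w x • f x :=
      funext fun x => deriv_fun_smul (hw.differentiable x) (hf.differentiable x)
    rw [hderiv]
    exact (ih hw.of_succ hf.deriv).add (ih hw.deriv hf.of_succ)

end DifferentiableUpTo

end Regularity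

section Darboux

variable {𝕜 E : Type*} [NontriviallyNormedField 𝕜] [NormedAddCommGroup E] [NormedSpace 𝕜 E]
  {n : ℕ} {v w V : 𝕜 → 𝕜} {f g : 𝕜 → E}

/-- The first-order Darboux operator `∂ + w` with superpotential `w`. Its formal adjoint `-∂ + w`
is encoded as `-darboux (-w)`. -/
noncomputable def darboux (w : 𝕜 → 𝕜) (f : 𝕜 → E) : 𝕜 → E :=
  fun x => deriv f x + w x • f x

/-- The Schrödinger operator `-∂² + V` with potential `V`. -/
noncomputable def schrodinger (V : 𝕜 → 𝕜) (f : 𝕜 → E) : 𝕜 → E :=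
  fun x => -deriv (deriv f) x + V x • f x

protected theorem DifferentiableUpTo.darboux (hw : DifferentiableUpTo n w)
    (hf : DifferentiableUpTo (n + 1) f) : DifferentiableUpTo n (darboux w f) :=
  hf.deriv.add (hw.smul hf.of_succ)

protected theorem DifferentiableUpTo.schrodinger (hV : DifferentiableUpTo n V)
    (hf : DifferentiableUpTo (n + 2) f) : DifferentiableUpTo n (schrodinger V f) :=
  hf.deriv.deriv.neg.add (hV.smul hf.of_succ.of_succ)

theorem darboux_const_smul_sub (c : 𝕜) (hf : Differentiable 𝕜 f) (hg : Differentiable 𝕜 g) :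
    darboux w (c • f - g) = c • darboux w f - darboux w g := by
  funext x
  have hderiv : deriv (c • f - g) x = c • deriv f x - deriv g x := by
    rw [deriv_sub ((hf x).const_smul c) (hg x), deriv_const_smul c (hf x)]
  simp only [darboux, hderiv, Pi.sub_apply, Pi.smul_apply]
  module

theorem darboux_darboux (hw : Differentiable 𝕜 w) (hf : DifferentiableUpTo 2 f) :
    darboux v (darboux w f) = fun x =>
      deriv (deriv f) x + (v x + w x) • deriv f x + (deriv w x + v x * w x) • f x := by
  funext x
  have hderiv : deriv (darboux w f) x =
      deriv (deriv f) x + (w x • deriv f x + deriv w x • f x) := by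
    unfold darboux
    rw [deriv_fun_add (hf.deriv.differentiable x) ((hw x).fun_smul (hf.differentiable x)),
      deriv_fun_smul (hw x) (hf.differentiable x)]
  rw [darboux, hderiv, darboux]
  module

theorem schrodinger_eq_const_smul_sub_darboux_neg (c : 𝕜) (hw : Differentiable 𝕜 w)
    (hf : DifferentiableUpTo 2 f) :
    schrodinger (fun x => w x ^ 2 - deriv w x + c) f = c • f - darboux (-w) (darboux w f) := by
  rw [darboux_darboux hw hf]
  funext x
  simp only [schrodinger, Pi.sub_apply, Pi.smul_apply, Pi.neg_apply]
  module

theorem schrodinger_eq_const_smul_sub_darboux (c : 𝕜) (hw : Differentiable 𝕜 w)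
    (hf : DifferentiableUpTo 2 f) :
    schrodinger (fun x => w x ^ 2 + deriv w x + c) f = c • f - darboux w (darboux (-w) f) := by
  simpa only [Pi.neg_apply, neg_sq, deriv.neg, sub_neg_eq_add, neg_neg] using
    schrodinger_eq_const_smul_sub_darboux_neg c hw.neg hf

theorem darboux_schrodinger (c : 𝕜) (hw : DifferentiableUpTo 2 w)
    (hf : DifferentiableUpTo 3 f) :
    darboux w (schrodinger (fun x => w x ^ 2 - deriv w x + c) f) =
      schrodinger (fun x => w x ^ 2 + deriv w x + c) (darboux w f) := by
  have hwf : DifferentiableUpTo 2 (darboux w f) := hw.darboux hf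
  have hBA : Differentiable 𝕜 (darboux (-w) (darboux w f)) :=
    (hw.of_succ.neg.darboux hwf).differentiable
  rw [schrodinger_eq_const_smul_sub_darboux_neg c hw.differentiable hf.of_succ,
    darboux_const_smul_sub c hf.differentiable hBA,
    schrodinger_eq_const_smul_sub_darboux c hw.differentiable hwf]

end Darboux

section Tanh

theorem sech_sq (x : ℝ) : sech x ^ 2 = 1 - Real.tanh x ^ 2 := by
  have hcosh : Real.cosh x ≠ 0 := (Real.cosh_pos x).ne'
  rw [sech, Real.tanh_eq_sinh_div_cosh]
  field_simp
  linarith [Real.cosh_sq x]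

theorem contDiff_tanh {n : WithTop ℕ∞} : ContDiff ℝ n Real.tanh := by
  rw [funext Real.tanh_eq_sinh_div_cosh]
  exact Real.contDiff_sinh.div Real.contDiff_cosh fun x => (Real.cosh_pos x).ne'

theorem deriv_tanh (x : ℝ) : deriv Real.tanh x = 1 - Real.tanh x ^ 2 := by
  have hcosh : Real.cosh x ≠ 0 := (Real.cosh_pos x).ne'
  rw [funext Real.tanh_eq_sinh_div_cosh,
    deriv_fun_div Real.differentiable_sinh.differentiableAt
      Real.differentiable_cosh.differentiableAt hcosh, Real.deriv_sinh, Real.deriv_cosh]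
  field_simp

theorem deriv_two_mul_tanh (x : ℝ) :
    deriv (fun y => 2 * Real.tanh y) x = 2 * (1 - Real.tanh x ^ 2) := by
  rw [deriv_const_mul _ (contDiff_tanh.differentiable one_ne_zero x), deriv_tanh]

variable {E : Type*} [NormedAddCommGroup E] [NormedSpace ℝ E] {f : ℝ → E}

theorem darboux_two_mul_tanh_schrodinger (hf : DifferentiableUpTo 3 f) :
    darboux (fun x => 2 * Real.tanh x) (schrodinger (fun x => 1 - 6 * sech x ^ 2) f) =
      schrodinger (fun x => 1 - 2 * sech x ^ 2) (darboux (fun x => 2 * Real.tanh x) f) := by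
  have hw : DifferentiableUpTo 2 (fun x => 2 * Real.tanh x) :=
    .of_contDiff (contDiff_const.mul contDiff_tanh)
  have hsub (x : ℝ) : 1 - 6 * sech x ^ 2 =
      (2 * Real.tanh x) ^ 2 - deriv (fun y => 2 * Real.tanh y) x + -3 := by
    rw [deriv_two_mul_tanh, sech_sq]
    ring
  have hadd (x : ℝ) : 1 - 2 * sech x ^ 2 =
      (2 * Real.tanh x) ^ 2 + deriv (fun y => 2 * Real.tanh y) x + -3 := by
    rw [deriv_two_mul_tanh, sech_sq]
    ring
  simpa only [hsub, hadd] using darboux_schrodinger (-3) hw hf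

theorem darboux_tanh_schrodinger (hf : DifferentiableUpTo 3 f) :
    darboux Real.tanh (schrodinger (fun x => 1 - 2 * sech x ^ 2) f) =
      schrodinger (fun _ => 1) (darboux Real.tanh f) := by
  have hw : DifferentiableUpTo 2 Real.tanh := .of_contDiff contDiff_tanh
  have hsub (x : ℝ) : 1 - 2 * sech x ^ 2 = Real.tanh x ^ 2 - deriv Real.tanh x + 0 := by
    rw [deriv_tanh, sech_sq]
    ring
  have hadd (x : ℝ) : Real.tanh x ^ 2 + deriv Real.tanh x + 0 = 1 := by
    rw [deriv_tanh]
    ring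
  simpa only [hsub, hadd] using darboux_schrodinger 0 hw hf

theorem SU_eq_darboux_darboux {g : ℝ → ℂ} (hg : DifferentiableUpTo 2 g) :
    SU g = darboux Real.tanh (darboux (fun x => 2 * Real.tanh x) g) := by
  rw [darboux_darboux ((contDiff_tanh.differentiable one_ne_zero).const_mul 2) hg]
  funext x
  rw [SU, deriv_two_mul_tanh]
  simp only [Complex.real_smul]
  push_cast
  ring

theorem SU_schrodinger {g : ℝ → ℂ} (hg : DifferentiableUpTo 4 g) :
    SU (schrodinger (fun x => 1 - 6 * sech x ^ 2) g) = schrodinger (fun _ => 1) (SU g) := by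
  have hV : ContDiff ℝ 2 (fun x => 1 - 6 * sech x ^ 2) := by
    simp only [sech_sq]
    exact contDiff_const.sub (contDiff_const.mul (contDiff_const.sub (contDiff_tanh.pow 2)))
  have hw : ContDiff ℝ 3 (fun x => 2 * Real.tanh x) := contDiff_const.mul contDiff_tanh
  have hLg := (DifferentiableUpTo.of_contDiff hV).schrodinger hg
  have hUg := (DifferentiableUpTo.of_contDiff hw).darboux hg
  rw [SU_eq_darboux_darboux hLg, darboux_two_mul_tanh_schrodinger hg.of_succ,
    darboux_tanh_schrodinger hUg, SU_eq_darboux_darboux hg.of_succ.of_succ]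

end Tanh

theorem SU_intertwines_L_L0 (g : ℝ → ℂ)
    (hg1 : Differentiable ℝ g)
    (hg2 : Differentiable ℝ (deriv g))
    (hg3 : Differentiable ℝ (deriv (deriv g)))
    (hg4 : Differentiable ℝ (deriv (deriv (deriv g)))) :
    ∀ x : ℝ,
      SU (fun y => -(deriv (deriv g) y) + g y - 6 * ((sech y : ℝ) : ℂ) ^ 2 * g y) x =
        -(deriv (deriv (SU g)) x) + SU g x := by
  intro x
  have hg : DifferentiableUpTo 4 g := ⟨hg1, hg2, hg3, hg4, trivial⟩
  have hL : (fun y => -(deriv (deriv g) y) + g y - 6 * ((sech y : ℝ) : ℂ) ^ 2 * g y) =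
      schrodinger (fun y => 1 - 6 * sech y ^ 2) g := by
    funext y
    simp only [schrodinger, Complex.real_smul]
    push_cast
    ring
  rw [hL, SU_schrodinger hg, schrodinger, one_smul]
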